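/- (Ergodic convergence.) Let (λ_k, z_k, z̃_k, ε_k) be NE-HPE sequences for T with parameter σ, distance generating function w ∈ 𝒟_Z(m,M), and initial point z₀ ∈ Z, set r_k := (1/λ_k)(∇w(z_{k−1}) − ∇w(z_k)), τ := √2·M/√m and (dw)_0 := inf{(dw)_{z₀}(z*) : 0 ∈ T(z*)}, and for k ≥ 1 define Λ_k := Σ_{i=1}^{k} λ_i, z̃^a_k := (1/Λ_k) Σ_{i=1}^{k} λ_i z̃_i, r^a_k := (1/Λ_k) Σ_{i=1}^{k} λ_i r_i, ε^a_k := (1/Λ_k) Σ_{i=1}^{k} λ_i(ε_i + ⟨r_i, z̃_i − z̃^a_k⟩), and ρ_k := max_{i=1,…,k} (dw)_{z_i}(z̃_i). Then for every k ≥ 1: ε^a_k ≥ 0, r^a_k ∈ T^[ε^a_k](z̃^a_k), ‖r^a_k‖_* ≤ 2τ√((dw)_0)/Λ_k, and ε^a_k ≤ (3M/m)(2(dw)_0 + ρ_k)/Λ_k. Moreover: (a) if σ < 1 then ρ_k ≤ σ(dw)_0/(1−σ); (b) if Dom(T) has finite diameter D := sup{min{(dw)_y(y′), (dw)_{y′}(y)}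 : y, y′ ∈ Dom(T)} with respect to dw, then ρ_k ≤ (2M/m)[(dw)_0 + D]. -/

import Mathlib

open RealInnerProductSpace Filter

/-- The dual (extended) seminorm of a seminorm `p`:
`‖v‖_* = sup { ⟪v, z⟫ : p z ≤ 1 }`, valued in `[-∞, ∞]`. -/
noncomputable def dualSN {E : Type*} [NormedAddCommGroup E] [InnerProductSpace ℝ E]
    (p : E → ℝ) (v : E) : EReal :=
  ⨆ z : {z : E // p z ≤ 1}, ((⟪v, z.1⟫ : ℝ) : EReal)

/-- The Bregman distance `(dw)_z(z') := w(z') - w(z) - ⟪∇w(z), z' - z⟫`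
associated with `w`, whose gradient is `gw`. -/
noncomputable def breg {E : Type*} [NormedAddCommGroup E] [InnerProductSpace ℝ E]
    (w : E → ℝ) (gw : E → E) (z z' : E) : ℝ :=
  w z' - w z - ⟪gw z, z' - z⟫

/-- `w ∈ 𝒟_Z(m, M)`: `w` is differentiable on `Z` with gradient `gw`, is `m`-strongly
convex with respect to the seminorm `p` on `Z`, and `gw` is `M`-Lipschitz from `p` to the
dual seminorm of `p` on `Z`. -/
structure IsDGF {E : Type*} [NormedAddCommGroup E] [InnerProductSpace ℝ E]
    [FiniteDimensional ℝ E]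
    (Z : Set E) (p : Seminorm ℝ E) (m M : ℝ) (w : E → ℝ) (gw : E → E) : Prop where
  diff : ∀ z ∈ Z, HasGradientAt w (gw z) z
  strconv : ∀ z ∈ Z, ∀ z' ∈ Z, m / 2 * (p (z - z'))^2 ≤ w z' - w z - ⟪gw z, z' - z⟫
  lips : ∀ z ∈ Z, ∀ z' ∈ Z, dualSN ⇑p (gw z - gw z') ≤ ((M * p (z - z') : ℝ) : EReal)

/-- A set-valued operator `T : E ⇉ E` is monotone. -/
def MonoOp {E : Type*} [NormedAddCommGroup E] [InnerProductSpace ℝ E]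
    (T : E → Set E) : Prop :=
  ∀ z z' t t' : E, t ∈ T z → t' ∈ T z' → 0 ≤ ⟪z - z', t - t'⟫

/-- A set-valued operator `T : E ⇉ E` is maximal monotone. -/
def MaxMonoOp {E : Type*} [NormedAddCommGroup E] [InnerProductSpace ℝ E]
    (T : E → Set E) : Prop :=
  MonoOp T ∧ ∀ T' : E → Set E, MonoOp T' → (∀ z, T z ⊆ T' z) → T' = T

/-- The ε-enlargement `T^[ε]` of a monotone operator `T`. -/
def epsEnl {E : Type*} [NormedAddCommGroup E] [InnerProductSpace ℝ E]
    (T : E → Set E) (ε : ℝ) (z : E) : Set E :=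
  {t | ∀ z' t' : E, t' ∈ T z' → -ε ≤ ⟪t - t', z - z'⟫}

/-- NE-HPE sequences `(λ_k, z_k, z̃_k, ε_k)` for `T`, with parameter `σ`, distance
generating function `w` (with gradient `gw`) and initial point `z_0 = zs 0 ∈ Z`. -/
structure NEHPE {E : Type*} [NormedAddCommGroup E] [InnerProductSpace ℝ E]
    (Z : Set E) (w : E → ℝ) (gw : E → E) (T : E → Set E) (σ : ℝ)
    (lam : ℕ → ℝ) (zs : ℕ → E) (zt : ℕ → E) (ε : ℕ → ℝ) : Prop where
  lam_pos : ∀ k, 1 ≤ k → 0 < lam k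
  zs_mem : ∀ k, zs k ∈ Z
  zt_mem : ∀ k, 1 ≤ k → zt k ∈ Z
  eps_nonneg : ∀ k, 1 ≤ k → 0 ≤ ε k
  incl : ∀ k, 1 ≤ k → (1 / lam k) • (gw (zs (k-1)) - gw (zs k)) ∈ epsEnl T (ε k) (zt k)
  err : ∀ k, 1 ≤ k →
    breg w gw (zs k) (zt k) + lam k * ε k ≤ σ * breg w gw (zs (k-1)) (zt k)

/-!
The error condition makes `λ_k (ε_k + ⟪r_k, z̃_k - u⟫) + (dw)_{z_k}(u)` at most `(dw)_{z_{k-1}}(u)`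
for every `u`. At a zero of `T` the first summand is nonnegative, so the distances to the solution
decrease, which controls `z_0 - z_k = O(√(dw)_0)` and hence the averaged residual. Summing over `k`
bounds an affine function of `u`; its value at the averaged iterate is at most its value at one of
the `z̃_j`, where the sum is bounded by `(dw)_{z_0}(z̃_j)`.

For the diameter bound one needs `(dw)_{z*}(z̃_k) ≤ (3M - m)/4 ‖z̃_k - z*‖²`. As `Z` need not be
convex, the gradient cannot be integrated along the segment from `z*` to `z̃_k`; the midpoint
suffices, and it lies in the closure of `Dom T`. Indeed, the points where some enlargement of `T`
has a value form a convex set (weighted means of values stay in an enlargement), and Minty's theorem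
puts this set inside the closure of `Dom T`. Minty's theorem itself follows for finite families from
Sion's minimax theorem for `∑ μ_i ⟪t_i + y, y - z_i⟫`, tested at the barycentre `y = ∑ μ_i z_i`, and
in general from compactness.
-/

section MaximalMonotone

open scoped Topology

variable {E : Type*} [NormedAddCommGroup E] [InnerProductSpace ℝ E] {T : E → Set E}

theorem sum_sum_mul_mul_inner_sub_nonpos {ι : Type*} {s : Finset ι} {z t : ι → E} {μ : ι → ℝ}
    (hμ : ∀ i ∈ s, 0 ≤ μ i) (hmono : ∀ i ∈ s, ∀ j ∈ s, 0 ≤ ⟪z i - z j, t i - t j⟫) :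
    ∑ i ∈ s, ∑ j ∈ s, μ i * μ j * ⟪t i, z j - z i⟫ ≤ 0 := by
  have hswap : ∑ i ∈ s, ∑ j ∈ s, μ i * μ j * ⟪t i, z j - z i⟫ =
      ∑ i ∈ s, ∑ j ∈ s, μ i * μ j * ⟪t j, z i - z j⟫ := by
    rw [Finset.sum_comm]
    simp only [mul_comm]
  have hpair : ∀ i j, μ i * μ j * ⟪t i, z j - z i⟫ + μ i * μ j * ⟪t j, z i - z j⟫ =
      -(μ i * μ j * ⟪z i - z j, t i - t j⟫) := fun i j => by
    simp only [inner_sub_right, real_inner_comm (t i), real_inner_comm (t j)]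
    ring
  have hsum : ∑ i ∈ s, ∑ j ∈ s, μ i * μ j * ⟪t i, z j - z i⟫ +
      ∑ i ∈ s, ∑ j ∈ s, μ i * μ j * ⟪t j, z i - z j⟫ ≤ 0 := by
    simp only [← Finset.sum_add_distrib, hpair]
    exact Finset.sum_nonpos fun i hi => Finset.sum_nonpos fun j hj =>
      neg_nonpos.2 (mul_nonneg (mul_nonneg (hμ i hi) (hμ j hj)) (hmono i hi j hj))
  linarith

theorem sum_mul_inner_add_sub_nonpos_of_mem_stdSimplex {ι : Type*} [Fintype ι] {z t : ι → E}
    {μ : ι → ℝ} (hμ : μ ∈ stdSimplex ℝ ι) (hmono : ∀ i j, 0 ≤ ⟪z i - z j, t i - t j⟫) :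
    ∑ i, μ i * ⟪t i + ∑ j, μ j • z j, ∑ j, μ j • z j - z i⟫ ≤ 0 := by
  set b := ∑ j, μ j • z j with hb
  have hsub : ∀ i, b - z i = ∑ j, μ j • (z j - z i) := fun i => by
    simp only [smul_sub, Finset.sum_sub_distrib, ← Finset.sum_smul, hμ.2, one_smul, hb]
  have hcancel : ∑ i, μ i * ⟪b, b - z i⟫ = 0 := by
    simp only [← real_inner_smul_right, ← inner_sum, smul_sub, Finset.sum_sub_distrib,
      ← Finset.sum_smul, hμ.2, one_smul, ← hb, sub_self, inner_zero_right]
  calc ∑ i, μ i * ⟪t i + b, b - z i⟫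
      = ∑ i, μ i * ⟪t i, b - z i⟫ + ∑ i, μ i * ⟪b, b - z i⟫ := by
        simp only [inner_add_left, mul_add, Finset.sum_add_distrib]
    _ = ∑ i, ∑ j, μ i * μ j * ⟪t i, z j - z i⟫ := by
        rw [hcancel, add_zero]
        simp only [hsub, inner_sum, real_inner_smul_right, Finset.mul_sum, mul_assoc]
    _ ≤ 0 := sum_sum_mul_mul_inner_sub_nonpos (fun i _ => hμ.1 i) fun i _ j _ => hmono i j

theorem convexOn_inner_add_sub (t z : E) :
    ConvexOn ℝ Set.univ fun y : E => ⟪t + y, y - z⟫ := by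
  refine ⟨convex_univ, fun x _ y _ a b ha hb hab => ?_⟩
  obtain rfl : b = 1 - a := by linarith
  have hgap : a * ⟪t + x, x - z⟫ + (1 - a) * ⟪t + y, y - z⟫ -
      ⟪t + (a • x + (1 - a) • y), a • x + (1 - a) • y - z⟫ = a * (1 - a) * ⟪x - y, x - y⟫ := by
    simp only [inner_add_left, inner_add_right, inner_sub_left, inner_sub_right,
      real_inner_smul_left, real_inner_smul_right, real_inner_comm x y]
    ring
  have hnonneg : 0 ≤ a * (1 - a) * ⟪x - y, x - y⟫ :=
    mul_nonneg (mul_nonneg ha hb) real_inner_self_nonneg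
  simp only [smul_eq_mul]
  linarith

theorem exists_forall_inner_add_sub_nonpos_of_finite {ι : Type*} [Finite ι] [Nonempty ι]
    {z t : ι → E} (hmono : ∀ i j, 0 ≤ ⟪z i - z j, t i - t j⟫) :
    ∃ y ∈ convexHull ℝ (Set.range z), ∀ i, ⟪t i + y, y - z i⟫ ≤ 0 := by
  classical
  have := Fintype.ofFinite ι
  let X := convexHull ℝ (Set.range z)
  let f : E → (ι → ℝ) → ℝ := fun y μ => ∑ i, μ i * ⟪t i + y, y - z i⟫
  have hconvex : ∀ μ ∈ stdSimplex ℝ ι, ConvexOn ℝ X fun y => f y μ := fun μ hμ =>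
    (Finset.sum_induction (fun i y => μ i * ⟪t i + y, y - z i⟫) (ConvexOn ℝ Set.univ)
      (fun _ _ => ConvexOn.add) (convexOn_const 0 convex_univ)
      fun i _ => (convexOn_inner_add_sub (t i) (z i)).smul (hμ.1 i)) |>.subset
      (Set.subset_univ X) (convex_convexHull ℝ _) |>.congr fun y _ => Finset.sum_apply ..
  have hlinear : ∀ y ∈ X, ConcaveOn ℝ (stdSimplex ℝ ι) (f y) := fun y _ =>
    (∑ i, ⟪t i + y, y - z i⟫ • LinearMap.proj (R := ℝ) (φ := fun _ : ι => ℝ) i).concaveOn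
      (convex_stdSimplex ℝ ι) |>.congr fun μ _ => by simp [f, mul_comm]
  obtain ⟨y, hy, μ, hμ, hsaddle⟩ := Sion.exists_isSaddlePointOn
    ((Set.range_nonempty z).convexHull (𝕜 := ℝ)) (convex_convexHull ℝ _)
    ((Set.finite_range z).isCompact_convexHull ℝ)
    (fun μ _ =>
      (by fun_prop : Continuous (f · μ)).lowerSemicontinuous.lowerSemicontinuousOn _)
    (fun μ hμ => (hconvex μ hμ).quasiconvexOn)
    (convex_stdSimplex ℝ ι) ⟨_, single_mem_stdSimplex ℝ (Classical.arbitrary ι)⟩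
    (isCompact_stdSimplex ℝ ι)
    (fun y _ => (by fun_prop : Continuous (f y)).upperSemicontinuous.upperSemicontinuousOn _)
    (fun y hy => (hlinear y hy).quasiconcaveOn)
  refine ⟨y, hy, fun i => ?_⟩
  calc ⟪t i + y, y - z i⟫ = f y (Pi.single i 1) := by simp [f, Pi.single_apply]
    _ ≤ f (∑ j, μ j • z j) μ := hsaddle _ ((convex_convexHull ℝ _).sum_mem
        (fun j _ => hμ.1 j) hμ.2 fun j _ => subset_convexHull ℝ _ ⟨j, rfl⟩)
        _ (single_mem_stdSimplex ℝ i)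
    _ ≤ 0 := sum_mul_inner_add_sub_nonpos_of_mem_stdSimplex hμ hmono

theorem isCompact_setOf_inner_add_sub_nonpos [FiniteDimensional ℝ E] (t z : E) :
    IsCompact {y : E | ⟪t + y, y - z⟫ ≤ 0} := by
  convert isCompact_closedBall ((1 / 2 : ℝ) • (z - t)) (‖t + z‖ / 2) using 1
  ext y
  have hsquare : ⟪t + y, y - z⟫ = ‖y - (1 / 2 : ℝ) • (z - t)‖ ^ 2 - (‖t + z‖ / 2) ^ 2 := by
    simp only [div_pow, ← real_inner_self_eq_norm_sq, inner_add_left, inner_add_right,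
      inner_sub_left, inner_sub_right, real_inner_smul_left, real_inner_smul_right,
      real_inner_comm y t, real_inner_comm y z, real_inner_comm t z]
    ring
  rw [Set.mem_ofPred_eq, mem_closedBall_iff_norm, hsquare, sub_nonpos,
    sq_le_sq₀ (norm_nonneg _) (by positivity)]

theorem exists_forall_inner_add_sub_nonpos [FiniteDimensional ℝ E] {ι : Type*} {z t : ι → E}
    (hmono : ∀ i j, 0 ≤ ⟪z i - z j, t i - t j⟫) :
    ∃ y, ∀ i, ⟪t i + y, y - z i⟫ ≤ 0 := by
  classical
  rcases isEmpty_or_nonempty ι with _ | ⟨⟨i₀⟩⟩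
  · exact ⟨0, isEmptyElim⟩
  have hfinite : ∀ u : Finset ι, ({y | ⟪t i₀ + y, y - z i₀⟫ ≤ 0} ∩
      ⋂ i ∈ u, {y | ⟪t i + y, y - z i⟫ ≤ 0}).Nonempty := fun u => by
    have : Nonempty ↥(insert i₀ u) := ⟨i₀, Finset.mem_insert_self i₀ u⟩
    obtain ⟨y, -, hy⟩ := exists_forall_inner_add_sub_nonpos_of_finite
      (z := fun i : ↥(insert i₀ u) => z i) (t := fun i => t i) fun i j => hmono i j
    exact ⟨y, hy ⟨i₀, Finset.mem_insert_self i₀ u⟩,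
      Set.mem_iInter₂.2 fun i hi => hy ⟨i, Finset.mem_insert_of_mem hi⟩⟩
  obtain ⟨y, -, hy⟩ := (isCompact_setOf_inner_add_sub_nonpos (t i₀) (z i₀)).inter_iInter_nonempty
    _ (fun i => (isCompact_setOf_inner_add_sub_nonpos (t i) (z i)).isClosed) hfinite
  exact ⟨y, fun i => Set.mem_iInter.1 hy i⟩

theorem MaxMonoOp.mem_of_forall_inner_nonneg (hT : MaxMonoOp T) {z t : E}
    (h : ∀ z' t', t' ∈ T z' → 0 ≤ ⟪z - z', t - t'⟫) : t ∈ T z := by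
  have hext : MonoOp fun y => {s | s ∈ T y ∨ y = z ∧ s = t} := by
    rintro y y' s s' (hs | ⟨rfl, rfl⟩) (hs' | ⟨rfl, rfl⟩)
    · exact hT.1 y y' s s' hs hs'
    · rw [← neg_sub y', ← neg_sub s', inner_neg_neg]
      exact h y s hs
    · exact h y' s' hs'
    · simp only [sub_self, inner_zero_right, le_refl]
  rw [← hT.2 _ hext fun _ _ => Or.inl]
  exact Or.inr ⟨rfl, rfl⟩

theorem MaxMonoOp.nonneg_of_mem_epsEnl (hT : MaxMonoOp T) {e : ℝ} {z t : E}
    (h : t ∈ epsEnl T e z) : 0 ≤ e := by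
  by_contra! he
  have ht : t ∈ T z := hT.mem_of_forall_inner_nonneg fun z' t' ht' => by
    rw [real_inner_comm]
    linarith [h z' t' ht']
  have := h z t ht
  rw [sub_self, inner_zero_left] at this
  linarith

theorem MonoOp.subset_epsEnl_zero (hT : MonoOp T) (z : E) : T z ⊆ epsEnl T 0 z :=
  fun t ht z' t' ht' => by
    rw [neg_zero, real_inner_comm]
    exact hT z z' t t' ht ht'

theorem MaxMonoOp.exists_add_smul_eq [FiniteDimensional ℝ E] (hT : MaxMonoOp T) {l : ℝ}
    (hl : 0 < l) (x : E) : ∃ y, ∃ t ∈ T y, y + l • t = x := by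
  obtain ⟨y, hy⟩ := exists_forall_inner_add_sub_nonpos
    (z := fun a : {a : E × E // a.2 ∈ T a.1} => a.1.1) (t := fun a => l • a.1.2 - x)
    fun a b => by
      rw [sub_sub_sub_cancel_right, ← smul_sub, real_inner_smul_right]
      exact mul_nonneg hl.le (hT.1 _ _ _ _ a.2 b.2)
  refine ⟨y, l⁻¹ • (x - y), hT.mem_of_forall_inner_nonneg fun z' t' ht' => ?_, by
    rw [smul_inv_smul₀ hl.ne', add_sub_cancel]⟩
  have hscale : l⁻¹ • (x - y) - t' = -(l⁻¹ • (l • t' - x + y)) := by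
    rw [smul_add, smul_sub, smul_sub, inv_smul_smul₀ hl.ne']
    abel
  rw [hscale, inner_neg_right, real_inner_smul_right, real_inner_comm]
  exact neg_nonneg.2 (mul_nonpos_of_nonneg_of_nonpos (inv_nonneg.2 hl.le) (hy ⟨(z', t'), ht'⟩))

/-- The domain `Dom T` of a set-valued operator: the points at which it has a value. -/
def opDom (T : E → Set E) : Set E :=
  {z | (T z).Nonempty}

theorem norm_sub_sq_le_of_mem_epsEnl {e l : ℝ} {u y r t : E} (hr : r ∈ epsEnl T e u)
    (ht : t ∈ T y) (hl : 0 < l) (hy : y + l • t = u) :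
    ‖u - y‖ ^ 2 ≤ 2 * l * e + l ^ 2 * ‖r‖ ^ 2 := by
  obtain rfl := hy
  have henl : -e ≤ ⟪r - t, l • t⟫ := by simpa only [add_sub_cancel_left] using hr y t ht
  have hexpand : ‖l • t‖ ^ 2 + ‖l • t - l • r‖ ^ 2 =
      l ^ 2 * ‖r‖ ^ 2 - 2 * l * ⟪r - t, l • t⟫ := by
    simp only [← real_inner_self_eq_norm_sq, inner_sub_left, inner_sub_right,
      real_inner_smul_left, real_inner_smul_right, real_inner_comm t]
    ring
  have hscaled : l * -e ≤ l * ⟪r - t, l • t⟫ := mul_le_mul_of_nonneg_left henl hl.le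
  rw [add_sub_cancel_left]
  linarith [sq_nonneg ‖l • t - l • r‖]

theorem MaxMonoOp.mem_closure_opDom_of_mem_epsEnl [FiniteDimensional ℝ E] (hT : MaxMonoOp T)
    {e : ℝ} {u r : E} (hr : r ∈ epsEnl T e u) : u ∈ closure (opDom T) := by
  choose! y t ht hy using fun (l : ℝ) (hl : 0 < l) => hT.exists_add_smul_eq hl u
  have hbound : Tendsto (fun l : ℝ => 2 * l * e + l ^ 2 * ‖r‖ ^ 2) (𝓝[>] 0) (𝓝 0) :=
    ((by fun_prop : Continuous fun l : ℝ => 2 * l * e + l ^ 2 * ‖r‖ ^ 2).tendsto' 0 0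
      (by simp)).mono_left nhdsWithin_le_nhds
  have hsq : Tendsto (fun l => ‖u - y l‖ ^ 2) (𝓝[>] 0) (𝓝 0) :=
    squeeze_zero' (.of_forall fun _ => sq_nonneg _) (eventually_mem_nhdsWithin.mono fun l hl =>
      norm_sub_sq_le_of_mem_epsEnl hr (ht l hl) hl (hy l hl)) hbound
  have hlim : Tendsto y (𝓝[>] 0) (𝓝 u) := by
    rw [tendsto_iff_norm_sub_tendsto_zero]
    simpa [norm_sub_rev, Real.sqrt_sq] using hsq.sqrt
  exact mem_closure_of_tendsto hlim (eventually_mem_nhdsWithin.mono fun l hl => ⟨t l, ht l hl⟩)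

/-- The error `(∑ aᵢ)⁻¹ ∑ aᵢ (eᵢ + ⟪tᵢ, xᵢ - x̄⟫)`, with `x̄` the weighted mean of the `xᵢ`, of the
weighted mean of values `tᵢ ∈ T^[eᵢ](xᵢ)` as an element of an enlargement of `T` at `x̄`. -/
noncomputable def ergodicError {ι : Type*} (s : Finset ι) (a e : ι → ℝ) (x t : ι → E) : ℝ :=
  s.centerMass a fun i => e i + ⟪t i, x i - s.centerMass a x⟫

theorem ergodicError_add_inner_centerMass_sub {ι : Type*} {s : Finset ι} {a e : ι → ℝ} {x t : ι → E}
    (ha : ∑ i ∈ s, a i ≠ 0) (z' t' : E) :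
    ergodicError s a e x t + ⟪s.centerMass a t - t', s.centerMass a x - z'⟫ =
      s.centerMass a fun i => e i + ⟪t i - t', x i - z'⟫ := by
  set b := s.centerMass a x
  have hsplit : ∀ i, a i * (e i + ⟪t i - t', x i - z'⟫) =
      a i * (e i + ⟪t i, x i - b⟫) + ⟪a i • t i, b - z'⟫ - ⟪t', a i • (x i - z')⟫ :=
    fun i => by
      simp only [inner_sub_left, inner_sub_right, real_inner_smul_left, real_inner_smul_right]
      ring
  have hx : ∑ i ∈ s, a i • (x i - z') = (∑ i ∈ s, a i) • (b - z') := by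
    simp only [smul_sub, Finset.sum_sub_distrib, b, Finset.centerMass,
      ← Finset.sum_smul, smul_inv_smul₀ ha]
  have ht : ∑ i ∈ s, a i • t i = (∑ i ∈ s, a i) • s.centerMass a t := (smul_inv_smul₀ ha _).symm
  have hsum : ∑ i ∈ s, a i * (e i + ⟪t i - t', x i - z'⟫) =
      ∑ i ∈ s, a i * (e i + ⟪t i, x i - b⟫) +
        (∑ i ∈ s, a i) * ⟪s.centerMass a t - t', b - z'⟫ := by
    simp only [hsplit, Finset.sum_sub_distrib, Finset.sum_add_distrib, ← sum_inner, ← inner_sum,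
      hx, ht]
    rw [real_inner_smul_left, real_inner_smul_right, inner_sub_left]
    ring
  change (∑ i ∈ s, a i)⁻¹ * ∑ i ∈ s, a i * (e i + ⟪t i, x i - b⟫) + _ =
    (∑ i ∈ s, a i)⁻¹ * ∑ i ∈ s, a i * (e i + ⟪t i - t', x i - z'⟫)
  rw [hsum, mul_add, inv_mul_cancel_left₀ ha]

theorem centerMass_mem_epsEnl {ι : Type*} {s : Finset ι} {a e : ι → ℝ} {x t : ι → E}
    (ha : ∀ i ∈ s, 0 ≤ a i) (hpos : 0 < ∑ i ∈ s, a i) (ht : ∀ i ∈ s, t i ∈ epsEnl T (e i) (x i)) :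
    s.centerMass a t ∈ epsEnl T (ergodicError s a e x t) (s.centerMass a x) :=
  fun z' t' ht' => by
    have hnonneg : 0 ≤ s.centerMass a fun i => e i + ⟪t i - t', x i - z'⟫ :=
      (convex_Ici (𝕜 := ℝ) (0 : ℝ)).centerMass_mem ha hpos fun i hi => by
        rw [Set.mem_Ici]
        linarith [ht i hi z' t' ht']
    linarith [ergodicError_add_inner_centerMass_sub (e := e) (x := x) (t := t) hpos.ne' z' t']

theorem convex_setOf_exists_mem_epsEnl (T : E → Set E) :
    Convex ℝ {z | ∃ e, (epsEnl T e z).Nonempty} := by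
  refine convex_iff_sum_mem.2 fun s a ha hsum hmem => ?_
  choose! e t ht using hmem
  rw [← s.centerMass_eq_of_sum_1 _ hsum]
  exact ⟨_, _, centerMass_mem_epsEnl ha (hsum.symm ▸ one_pos) ht⟩

theorem MaxMonoOp.midpoint_mem_closure_opDom [FiniteDimensional ℝ E] (hT : MaxMonoOp T)
    {e : ℝ} {x u r : E} (hx : x ∈ opDom T) (hr : r ∈ epsEnl T e u) :
    midpoint ℝ x u ∈ closure (opDom T) := by
  obtain ⟨t, ht⟩ := hx
  obtain ⟨e', v, hv⟩ := (convex_setOf_exists_mem_epsEnl T).midpoint_mem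
    ⟨0, t, hT.1.subset_epsEnl_zero x ht⟩ ⟨e, r, hr⟩
  exact hT.mem_closure_opDom_of_mem_epsEnl hv

end MaximalMonotone

section BregmanDistance

variable {E : Type*} [NormedAddCommGroup E] [InnerProductSpace ℝ E] {p : Seminorm ℝ E}

theorem inner_le_mul_of_dualSN_le {v : E} {c : ℝ} (h : dualSN ⇑p v ≤ (c : EReal)) (u : E) :
    ⟪v, u⟫ ≤ c * p u := by
  have hscaled : ∀ a > p u, ⟪v, u⟫ ≤ c * a := fun a ha => by
    have ha₀ : 0 < a := (apply_nonneg p u).trans_lt ha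
    have hball : p (a⁻¹ • u) ≤ 1 := by
      rw [map_smul_eq_mul, Real.norm_of_nonneg (inv_nonneg.2 ha₀.le), inv_mul_le_one₀ ha₀]
      exact ha.le
    have hle : ⟪v, a⁻¹ • u⟫ ≤ c :=
      EReal.coe_le_coe_iff.1 ((le_iSup_of_le ⟨a⁻¹ • u, hball⟩ le_rfl).trans h)
    rwa [real_inner_smul_right, inv_mul_le_iff₀ ha₀, mul_comm] at hle
  exact ge_of_tendsto ((continuous_const_mul c).continuousWithinAt (s := Set.Ioi (p u)))
    (eventually_mem_nhdsWithin.mono hscaled)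

theorem dualSN_smul_le {a c : ℝ} {v : E} (ha : 0 ≤ a) (h : dualSN ⇑p v ≤ (c : EReal)) :
    dualSN ⇑p (a • v) ≤ ((a * c : ℝ) : EReal) :=
  iSup_le fun z => EReal.coe_le_coe_iff.2 <| by
    rw [real_inner_smul_left]
    exact mul_le_mul_of_nonneg_left
      (EReal.coe_le_coe_iff.1 ((le_iSup_of_le z le_rfl).trans h)) ha

theorem continuous_seminorm_of_finiteDimensional [FiniteDimensional ℝ E] (p : Seminorm ℝ E) :
    Continuous p :=
  continuousOn_univ.1 (p.convexOn.continuousOn isOpen_univ)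

section Identities

variable (w : E → ℝ) (gw : E → E)

theorem breg_self (a : E) : breg w gw a a = 0 := by
  simp only [breg, sub_self, inner_zero_right]

theorem inner_sub_sub_eq_breg (a b c d : E) : ⟪gw a - gw b, c - d⟫ =
    breg w gw a d - breg w gw b d - (breg w gw a c - breg w gw b c) := by
  simp only [breg, inner_sub_left, inner_sub_right]
  ring

theorem breg_eq_add_add_inner (a x u : E) :
    breg w gw a u = breg w gw a x + breg w gw x u + ⟪gw x - gw a, u - x⟫ := by
  rw [inner_sub_sub_eq_breg w gw, breg_self]
  ring

end Identities

namespace IsDGF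

variable [FiniteDimensional ℝ E] {Z : Set E} {m M : ℝ} {w : E → ℝ} {gw : E → E}
  {a b c u x : E}

theorem inner_sub_le (hw : IsDGF Z p m M w gw) (ha : a ∈ Z) (hb : b ∈ Z) (u : E) :
    ⟪gw a - gw b, u⟫ ≤ M * p (a - b) * p u :=
  inner_le_mul_of_dualSN_le (hw.lips a ha b hb) u

theorem mul_sq_le_breg (hw : IsDGF Z p m M w gw) (ha : a ∈ Z) (hb : b ∈ Z) :
    m / 2 * p (a - b) ^ 2 ≤ breg w gw a b :=
  hw.strconv a ha b hb

theorem breg_nonneg (hw : IsDGF Z p m M w gw) (hm : 0 ≤ m) (ha : a ∈ Z) (hb : b ∈ Z) :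
    0 ≤ breg w gw a b :=
  (by positivity : (0 : ℝ) ≤ m / 2 * p (a - b) ^ 2).trans (hw.mul_sq_le_breg ha hb)

theorem mul_sq_le_of_breg_le (hw : IsDGF Z p m M w gw) (hm : 0 ≤ m) (ha : a ∈ Z) (hb : b ∈ Z)
    (hu : u ∈ Z) (h : breg w gw b u ≤ breg w gw a u) :
    m * p (a - b) ^ 2 ≤ 8 * breg w gw a u := by
  have htri : p (a - b) ≤ p (a - u) + p (b - u) := by
    simpa only [sub_sub_sub_cancel_right] using map_sub_le_add p (a - u) (b - u)
  have hsq : p (a - b) ^ 2 ≤ 2 * (p (a - u) ^ 2 + p (b - u) ^ 2) :=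
    (pow_le_pow_left₀ (apply_nonneg p _) htri 2).trans add_sq_le
  linarith [mul_le_mul_of_nonneg_left hsq hm, hw.mul_sq_le_breg ha hu, hw.mul_sq_le_breg hb hu]

theorem le_apply_sInf_breg_image {α : Type*} [Preorder α] [TopologicalSpace α]
    [ClosedIciTopology α] (hw : IsDGF Z p m M w gw) (hm : 0 ≤ m) (ha : a ∈ Z) {S : Set E}
    (hSZ : S ⊆ Z) (hS : S.Nonempty) {f : ℝ → α} (hf : Continuous f) {l : α}
    (hl : ∀ z ∈ S, l ≤ f (breg w gw a z)) : l ≤ f (sInf (breg w gw a '' S)) :=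
  closure_minimal (t := f ⁻¹' Set.Ici l) (Set.image_subset_iff.2 hl) (isClosed_Ici.preimage hf) <|
    csInf_mem_closure (hS.image _)
      ⟨0, Set.forall_mem_image.2 fun _ hz => hw.breg_nonneg hm ha (hSZ hz)⟩

theorem breg_le_mul_sq (hw : IsDGF Z p m M w gw) (ha : a ∈ Z) (hb : b ∈ Z) :
    breg w gw a b ≤ (M - m / 2) * p (b - a) ^ 2 := by
  have hsymm : breg w gw a b + breg w gw b a = ⟪gw b - gw a, b - a⟫ := by
    rw [inner_sub_sub_eq_breg w gw, breg_self, breg_self]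
    ring
  have hlips := hw.inner_sub_le hb ha (b - a)
  linarith [hw.mul_sq_le_breg hb ha]

theorem breg_le_of_midpoint_mem_closure (hw : IsDGF Z p m M w gw) (hx : x ∈ Z) (hu : u ∈ Z)
    (hmid : midpoint ℝ x u ∈ closure Z) :
    breg w gw x u ≤ (3 * M - m) / 4 * p (u - x) ^ 2 := by
  have hp := continuous_seminorm_of_finiteDimensional p
  let bound : E → ℝ := fun q => (M - m / 2) * p (q - x) ^ 2 + (M - m / 2) * p (u - q) ^ 2 +
    M * p (q - x) * p (u - q)
  have hvia : ∀ q ∈ Z, breg w gw x u ≤ bound q := fun q hq => by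
    rw [breg_eq_add_add_inner w gw x q u]
    exact add_le_add_three (hw.breg_le_mul_sq hx hq) (hw.breg_le_mul_sq hq hu)
      (hw.inner_sub_le hq hx (u - q))
  have hhalf : p ((1 / 2 : ℝ) • (u - x)) = p (u - x) / 2 := by
    rw [map_smul_eq_mul, Real.norm_of_nonneg (by norm_num)]
    ring
  have hleft : midpoint ℝ x u - x = (1 / 2 : ℝ) • (u - x) := by
    rw [midpoint_sub_left, invOf_eq_inv, one_div]
  have hright : u - midpoint ℝ x u = (1 / 2 : ℝ) • (u - x) := by
    rw [right_sub_midpoint, invOf_eq_inv, one_div]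
  calc breg w gw x u ≤ bound (midpoint ℝ x u) :=
        closure_minimal hvia (isClosed_le continuous_const (by fun_prop : Continuous bound)) hmid
    _ = (3 * M - m) / 4 * p (u - x) ^ 2 := by
        simp only [bound, hleft, hright, hhalf]
        ring

theorem breg_le_mul_two_mul_breg_add (hw : IsDGF Z p m M w gw) (hm : 0 < m) (hmM : m ≤ M)
    (ha : a ∈ Z) (hb : b ∈ Z) (hu : u ∈ Z) (hc : c ∈ Z) (h : breg w gw b u ≤ breg w gw a u) :
    breg w gw a c ≤ 3 * M / m * (2 * breg w gw a u + breg w gw b c) := by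
  have hM : 0 < M := hm.trans_le hmM
  have hprod : p (b - a) * p (c - u) ≤ p (a - u) ^ 2 + 2 * p (b - u) ^ 2 + p (b - c) ^ 2 := by
    have hba : p (b - a) ≤ p (b - u) + p (a - u) := by
      simpa only [sub_sub_sub_cancel_right] using map_sub_le_add p (b - u) (a - u)
    have hcu : p (c - u) ≤ p (b - u) + p (b - c) := by
      simpa only [sub_sub_sub_cancel_left] using map_sub_le_add p (b - u) (b - c)
    refine (mul_le_mul hba hcu (apply_nonneg p _) (by positivity)).trans ?_
    linarith [two_mul_le_add_sq (p (b - u)) (p (b - c)), two_mul_le_add_sq (p (a - u)) (p (b - u)),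
      two_mul_le_add_sq (p (a - u)) (p (b - c))]
  have hsquares : m * (p (b - a) * p (c - u)) ≤
      2 * breg w gw a u + 4 * breg w gw b u + 2 * breg w gw b c := by
    linarith [mul_le_mul_of_nonneg_left hprod hm.le, hw.mul_sq_le_breg ha hu,
      hw.mul_sq_le_breg hb hu, hw.mul_sq_le_breg hb hc]
  have hthree : breg w gw a c ≤ breg w gw b c + (breg w gw a u - breg w gw b u) +
      M * (p (b - a) * p (c - u)) := by
    linarith [hw.inner_sub_le hb ha (c - u), inner_sub_sub_eq_breg w gw b a c u]
  have hrest : 0 ≤ breg w gw b c + (breg w gw a u - breg w gw b u) :=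
    add_nonneg (hw.breg_nonneg hm.le hb hc) (sub_nonneg.2 h)
  rw [div_mul_eq_mul_div, le_div_iff₀ hm]
  linarith [mul_le_mul_of_nonneg_left hthree hm.le, mul_le_mul_of_nonneg_left hsquares hM.le,
    mul_le_mul_of_nonneg_right hmM hrest, mul_le_mul_of_nonneg_left h hM.le]

theorem breg_le_mul_breg_add_of_midpoint_mem_closure (hw : IsDGF Z p m M w gw) (hm : 0 < m)
    (hmM : m ≤ M) {D : ℝ} (ha : a ∈ Z) (hx : x ∈ Z) (hu : u ∈ Z) (hmid : midpoint ℝ x u ∈ closure Z)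
    (hD : m / 2 * p (u - x) ^ 2 ≤ D) :
    breg w gw a u ≤ 2 * M / m * (breg w gw a x + D) := by
  have hM : 0 < M := hm.trans_le hmM
  have hsquares : breg w gw a u ≤
      breg w gw a x + (M - m / 2) * p (a - x) ^ 2 + M * p (u - x) ^ 2 := by
    have hxa := hw.inner_sub_le hx ha (u - x)
    rw [map_sub_rev p x a] at hxa
    -- With `b = p (a - x)` and `d = p (u - x)`: `(M - m / 2) b² + (M + m) / 4 d² - M b d` equals
    -- `(M - m) (b - d / 2)² + m / 2 (b - d)²`.
    linarith [breg_eq_add_add_inner w gw a x u, hw.breg_le_of_midpoint_mem_closure hx hu hmid,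
      mul_nonneg (sub_nonneg.2 hmM) (sq_nonneg (p (a - x) - p (u - x) / 2)),
      mul_nonneg hm.le (sq_nonneg (p (a - x) - p (u - x)))]
  have hcoeff : 0 ≤ 2 * M - m := by linarith
  rw [div_mul_eq_mul_div, le_div_iff₀ hm]
  linarith [mul_le_mul_of_nonneg_left hsquares hm.le, mul_le_mul_of_nonneg_left hD hM.le,
    mul_le_mul_of_nonneg_left (hw.mul_sq_le_breg ha hx) hcoeff]

end IsDGF

end BregmanDistance

section NEHPESequences

variable {E : Type*} [NormedAddCommGroup E] [InnerProductSpace ℝ E]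

/-- The residual `r_k = (∇w(z_{k-1}) - ∇w(z_k)) / λ_k` of an NE-HPE iteration. -/
noncomputable def hpeResidual (gw : E → E) (lam : ℕ → ℝ) (zs : ℕ → E) (k : ℕ) : E :=
  (1 / lam k) • (gw (zs (k - 1)) - gw (zs k))

namespace NEHPE

section Residual

variable {Z : Set E} {w : E → ℝ} {gw : E → E} {T : E → Set E} {σ : ℝ} {lam ε : ℕ → ℝ}
  {zs zt : ℕ → E} {k : ℕ} {z : E}

theorem sum_lam_pos (h : NEHPE Z w gw T σ lam zs zt ε) (hk : 1 ≤ k) :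
    0 < ∑ i ∈ Finset.Icc 1 k, lam i :=
  Finset.sum_pos (fun i hi => h.lam_pos i (Finset.mem_Icc.1 hi).1) (Finset.nonempty_Icc.2 hk)

theorem smul_residual (h : NEHPE Z w gw T σ lam zs zt ε) (hk : 1 ≤ k) :
    lam k • hpeResidual gw lam zs k = gw (zs (k - 1)) - gw (zs k) := by
  rw [hpeResidual, one_div, smul_inv_smul₀ (h.lam_pos k hk).ne']

theorem sum_smul_residual (h : NEHPE Z w gw T σ lam zs zt ε) (k : ℕ) :
    ∑ i ∈ Finset.Icc 1 k, lam i • hpeResidual gw lam zs i = gw (zs 0) - gw (zs k) := by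
  induction k with
  | zero => simp
  | succ k ih =>
    rw [Finset.sum_Icc_succ_top (Nat.le_add_left 1 k), ih, h.smul_residual (Nat.le_add_left 1 k),
      Nat.add_sub_cancel, sub_add_sub_cancel]

theorem residual_centerMass_mem_epsEnl (h : NEHPE Z w gw T σ lam zs zt ε) (hk : 1 ≤ k) :
    (Finset.Icc 1 k).centerMass lam (hpeResidual gw lam zs) ∈
      epsEnl T (ergodicError (Finset.Icc 1 k) lam ε zt (hpeResidual gw lam zs))
        ((Finset.Icc 1 k).centerMass lam zt) :=
  centerMass_mem_epsEnl (fun i hi => (h.lam_pos i (Finset.mem_Icc.1 hi).1).le) (h.sum_lam_pos hk)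
    fun i hi => h.incl i (Finset.mem_Icc.1 hi).1

theorem mul_add_inner_residual_le (h : NEHPE Z w gw T σ lam zs zt ε) (hk : 1 ≤ k) (u : E) :
    lam k * (ε k + ⟪hpeResidual gw lam zs k, zt k - u⟫) + breg w gw (zs k) u +
      (1 - σ) * breg w gw (zs (k - 1)) (zt k) ≤ breg w gw (zs (k - 1)) u := by
  have hinner : lam k * ⟪hpeResidual gw lam zs k, zt k - u⟫ =
      breg w gw (zs (k - 1)) u - breg w gw (zs k) u -
        (breg w gw (zs (k - 1)) (zt k) - breg w gw (zs k) (zt k)) := by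
    rw [← real_inner_smul_left, h.smul_residual hk, inner_sub_sub_eq_breg w gw]
  linarith [h.err k hk]

theorem breg_add_le_of_zero_mem (h : NEHPE Z w gw T σ lam zs zt ε) (hk : 1 ≤ k) (hz : 0 ∈ T z) :
    breg w gw (zs k) z + (1 - σ) * breg w gw (zs (k - 1)) (zt k) ≤ breg w gw (zs (k - 1)) z := by
  have hincl : -ε k ≤ ⟪hpeResidual gw lam zs k, zt k - z⟫ := by
    simpa only [sub_zero, hpeResidual] using h.incl k hk z 0 hz
  have hnonneg : 0 ≤ lam k * (ε k + ⟪hpeResidual gw lam zs k, zt k - z⟫) :=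
    mul_nonneg (h.lam_pos k hk).le (by linarith)
  linarith [h.mul_add_inner_residual_le hk z]

theorem breg_le_mul_breg (h : NEHPE Z w gw T σ lam zs zt ε) (hk : 1 ≤ k) :
    breg w gw (zs k) (zt k) ≤ σ * breg w gw (zs (k - 1)) (zt k) := by
  linarith [h.err k hk, mul_nonneg (h.lam_pos k hk).le (h.eps_nonneg k hk)]

end Residual

variable [FiniteDimensional ℝ E] {Z : Set E} {p : Seminorm ℝ E} {m M : ℝ} {w : E → ℝ}
  {gw : E → E} {T : E → Set E} {σ : ℝ} {lam ε : ℕ → ℝ} {zs zt : ℕ → E} {k : ℕ} {z : E}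

theorem one_sub_mul_breg_nonneg (h : NEHPE Z w gw T σ lam zs zt ε) (hw : IsDGF Z p m M w gw)
    (hm : 0 ≤ m) (hσ : σ ≤ 1) (hk : 1 ≤ k) : 0 ≤ (1 - σ) * breg w gw (zs (k - 1)) (zt k) :=
  mul_nonneg (sub_nonneg.2 hσ) (hw.breg_nonneg hm (h.zs_mem _) (h.zt_mem k hk))

theorem sum_mul_add_inner_residual_le (h : NEHPE Z w gw T σ lam zs zt ε)
    (hw : IsDGF Z p m M w gw) (hm : 0 ≤ m) (hσ : σ ≤ 1) (k : ℕ) (u : E) :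
    ∑ i ∈ Finset.Icc 1 k, lam i * (ε i + ⟪hpeResidual gw lam zs i, zt i - u⟫) +
      breg w gw (zs k) u ≤ breg w gw (zs 0) u := by
  induction k with
  | zero => simp
  | succ k ih =>
    have hk : 1 ≤ k + 1 := Nat.le_add_left 1 k
    have hstep : lam (k + 1) * (ε (k + 1) + ⟪hpeResidual gw lam zs (k + 1), zt (k + 1) - u⟫) +
        breg w gw (zs (k + 1)) u ≤ breg w gw (zs k) u :=
      (le_add_of_nonneg_right (h.one_sub_mul_breg_nonneg hw hm hσ hk)).trans
        (h.mul_add_inner_residual_le hk u)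
    rw [Finset.sum_Icc_succ_top hk]
    linarith

theorem antitone_breg (h : NEHPE Z w gw T σ lam zs zt ε) (hw : IsDGF Z p m M w gw) (hm : 0 ≤ m)
    (hσ : σ ≤ 1) (hz : 0 ∈ T z) : Antitone fun k => breg w gw (zs k) z :=
  antitone_nat_of_succ_le fun k =>
    (le_add_of_nonneg_right (h.one_sub_mul_breg_nonneg hw hm hσ (Nat.le_add_left 1 k))).trans
      (h.breg_add_le_of_zero_mem (Nat.le_add_left 1 k) hz)

theorem breg_le_mul_div_one_sub (h : NEHPE Z w gw T σ lam zs zt ε) (hw : IsDGF Z p m M w gw)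
    (hm : 0 ≤ m) (hσ₀ : 0 ≤ σ) (hσ₁ : σ < 1) (hzZ : z ∈ Z) (hz : 0 ∈ T z) (hk : 1 ≤ k) :
    breg w gw (zs k) (zt k) ≤ σ * breg w gw (zs 0) z / (1 - σ) := by
  have hprev : (1 - σ) * breg w gw (zs (k - 1)) (zt k) ≤ breg w gw (zs 0) z := by
    linarith [h.breg_add_le_of_zero_mem hk hz, hw.breg_nonneg hm (h.zs_mem k) hzZ,
      h.antitone_breg hw hm hσ₁.le hz (Nat.zero_le (k - 1))]
  have hgap : 0 < 1 - σ := sub_pos.2 hσ₁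
  rw [le_div_iff₀ hgap]
  calc breg w gw (zs k) (zt k) * (1 - σ)
      ≤ σ * breg w gw (zs (k - 1)) (zt k) * (1 - σ) :=
        mul_le_mul_of_nonneg_right (h.breg_le_mul_breg hk) hgap.le
    _ = σ * ((1 - σ) * breg w gw (zs (k - 1)) (zt k)) := by ring
    _ ≤ σ * breg w gw (zs 0) z := mul_le_mul_of_nonneg_left hprev hσ₀

theorem breg_le_of_diam_le (h : NEHPE Z w gw T σ lam zs zt ε) (hw : IsDGF Z p m M w gw)
    (hm : 0 < m) (hmM : m ≤ M) (hT : MaxMonoOp T) (hdom : opDom T ⊆ Z) (hσ : σ ≤ 1)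
    (hz : 0 ∈ T z) {D : ℝ}
    (hD : ∀ y ∈ opDom T, ∀ y' ∈ opDom T, min (breg w gw y y') (breg w gw y' y) ≤ D)
    (hk : 1 ≤ k) : breg w gw (zs k) (zt k) ≤ 2 * M / m * (breg w gw (zs 0) z + D) := by
  have hp := continuous_seminorm_of_finiteDimensional p
  have hzT : z ∈ opDom T := ⟨0, hz⟩
  have hdiam : m / 2 * p (zt k - z) ^ 2 ≤ D :=
    closure_minimal (s := opDom T) (t := {y | m / 2 * p (y - z) ^ 2 ≤ D})
      (fun y hy => (le_min (hw.mul_sq_le_breg (hdom hy) (hdom hzT))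
        (map_sub_rev p y z ▸ hw.mul_sq_le_breg (hdom hzT) (hdom hy))).trans (hD y hy z hzT))
      (isClosed_le (by fun_prop) continuous_const)
      (hT.mem_closure_opDom_of_mem_epsEnl (h.incl k hk))
  have hmid : midpoint ℝ z (zt k) ∈ closure Z :=
    closure_mono hdom (hT.midpoint_mem_closure_opDom hzT (h.incl k hk))
  have hprev : 0 ≤ breg w gw (zs (k - 1)) (zt k) :=
    hw.breg_nonneg hm.le (h.zs_mem _) (h.zt_mem k hk)
  have hcoeff : 0 ≤ 2 * M / m := by have := hm.trans_le hmM; positivity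
  calc breg w gw (zs k) (zt k)
      ≤ σ * breg w gw (zs (k - 1)) (zt k) := h.breg_le_mul_breg hk
    _ ≤ breg w gw (zs (k - 1)) (zt k) := mul_le_of_le_one_left hprev hσ
    _ ≤ 2 * M / m * (breg w gw (zs (k - 1)) z + D) :=
        hw.breg_le_mul_breg_add_of_midpoint_mem_closure hm hmM (h.zs_mem _) (hdom hzT)
          (h.zt_mem k hk) hmid hdiam
    _ ≤ 2 * M / m * (breg w gw (zs 0) z + D) := mul_le_mul_of_nonneg_left
        (add_le_add_left (h.antitone_breg hw hm.le hσ hz (Nat.zero_le _)) D) hcoeff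

theorem exists_sum_mul_add_inner_centerMass_le (h : NEHPE Z w gw T σ lam zs zt ε)
    (hw : IsDGF Z p m M w gw) (hm : 0 ≤ m) (hσ : σ ≤ 1) (hk : 1 ≤ k) :
    ∃ j ∈ Finset.Icc 1 k, ∑ i ∈ Finset.Icc 1 k, lam i *
      (ε i + ⟪hpeResidual gw lam zs i, zt i - (Finset.Icc 1 k).centerMass lam zt⟫) ≤
        breg w gw (zs 0) (zt j) := by
  set b := (Finset.Icc 1 k).centerMass lam zt
  obtain ⟨j, hj, hjb⟩ := ((innerₗ E (gw (zs 0) - gw (zs k))).concaveOn convex_univ)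
    |>.exists_le_of_centerMass (t := Finset.Icc 1 k)
      (fun i hi => (h.lam_pos i (Finset.mem_Icc.1 hi).1).le) (h.sum_lam_pos hk)
      (p := zt) fun i _ => Set.mem_univ _
  rw [innerₗ_apply_apply, innerₗ_apply_apply] at hjb
  have hshift : ∑ i ∈ Finset.Icc 1 k, lam i * (ε i + ⟪hpeResidual gw lam zs i, zt i - b⟫) =
      ∑ i ∈ Finset.Icc 1 k, lam i * (ε i + ⟪hpeResidual gw lam zs i, zt i - zt j⟫) +
        ⟪gw (zs 0) - gw (zs k), zt j - b⟫ := by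
    rw [← h.sum_smul_residual, sum_inner, ← Finset.sum_add_distrib]
    refine Finset.sum_congr rfl fun i _ => ?_
    simp only [real_inner_smul_left, inner_sub_right]
    ring
  refine ⟨j, hj, ?_⟩
  rw [hshift, inner_sub_right]
  linarith [h.sum_mul_add_inner_residual_le hw hm hσ k (zt j),
    hw.breg_nonneg hm (h.zs_mem k) (h.zt_mem j (Finset.mem_Icc.1 hj).1)]

theorem ergodicError_residual_le (h : NEHPE Z w gw T σ lam zs zt ε)
    (hw : IsDGF Z p m M w gw) (hm : 0 < m) (hmM : m ≤ M) (hσ : σ ≤ 1) (hzZ : z ∈ Z)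
    (hz : 0 ∈ T z) (hk : 1 ≤ k) {ρ : ℝ}
    (hρ : ∀ i ∈ Finset.Icc 1 k, breg w gw (zs i) (zt i) ≤ ρ) :
    ergodicError (Finset.Icc 1 k) lam ε zt (hpeResidual gw lam zs) ≤
      3 * M / m * ((2 * breg w gw (zs 0) z + ρ) / ∑ i ∈ Finset.Icc 1 k, lam i) := by
  obtain ⟨j, hj, hsum⟩ := h.exists_sum_mul_add_inner_centerMass_le hw hm.le hσ hk
  have hcoeff : 0 ≤ 3 * M / m := by have := hm.trans_le hmM; positivity
  rw [ergodicError, Finset.centerMass, smul_eq_mul, inv_mul_eq_div, ← mul_div_assoc]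
  refine div_le_div_of_nonneg_right ?_ (h.sum_lam_pos hk).le
  calc _ ≤ breg w gw (zs 0) (zt j) := hsum
    _ ≤ 3 * M / m * (2 * breg w gw (zs 0) z + breg w gw (zs j) (zt j)) :=
        hw.breg_le_mul_two_mul_breg_add hm hmM (h.zs_mem 0) (h.zs_mem j) hzZ
          (h.zt_mem j (Finset.mem_Icc.1 hj).1) (h.antitone_breg hw hm.le hσ hz (Nat.zero_le j))
    _ ≤ 3 * M / m * (2 * breg w gw (zs 0) z + ρ) :=
        mul_le_mul_of_nonneg_left (add_le_add_right (hρ j hj) _) hcoeff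

theorem dualSN_gradient_sub_le (h : NEHPE Z w gw T σ lam zs zt ε) (hw : IsDGF Z p m M w gw)
    (hm : 0 < m) (hM : 0 ≤ M) (hσ : σ ≤ 1) (hzZ : z ∈ Z) (hz : 0 ∈ T z) (k : ℕ) :
    dualSN ⇑p (gw (zs 0) - gw (zs k)) ≤
      ((2 * (√2 * M / √m) * √(breg w gw (zs 0) z) : ℝ) : EReal) := by
  have hsq : m * p (zs 0 - zs k) ^ 2 ≤ 8 * breg w gw (zs 0) z :=
    hw.mul_sq_le_of_breg_le hm.le (h.zs_mem 0) (h.zs_mem k) hzZ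
      (h.antitone_breg hw hm.le hσ hz (Nat.zero_le k))
  have hdist : √m * p (zs 0 - zs k) ≤ 2 * √2 * √(breg w gw (zs 0) z) := by
    refine (sq_le_sq₀ (by positivity) (by positivity)).1 ?_
    rw [mul_pow, mul_pow, mul_pow, Real.sq_sqrt hm.le, Real.sq_sqrt zero_le_two,
      Real.sq_sqrt (hw.breg_nonneg hm.le (h.zs_mem 0) hzZ)]
    linarith
  refine (hw.lips _ (h.zs_mem 0) _ (h.zs_mem k)).trans (EReal.coe_le_coe_iff.2 ?_)
  calc M * p (zs 0 - zs k) = M / √m * (√m * p (zs 0 - zs k)) := by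
        field_simp
    _ ≤ M / √m * (2 * √2 * √(breg w gw (zs 0) z)) :=
        mul_le_mul_of_nonneg_left hdist (by positivity)
    _ = 2 * (√2 * M / √m) * √(breg w gw (zs 0) z) := by ring

theorem dualSN_residual_centerMass_le (h : NEHPE Z w gw T σ lam zs zt ε)
    (hw : IsDGF Z p m M w gw) (hm : 0 < m) (hM : 0 ≤ M) (hσ : σ ≤ 1) (hzZ : z ∈ Z)
    (hz : 0 ∈ T z) (hk : 1 ≤ k) :
    dualSN ⇑p ((Finset.Icc 1 k).centerMass lam (hpeResidual gw lam zs)) ≤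
      ((2 * (√2 * M / √m) * √(breg w gw (zs 0) z) / ∑ i ∈ Finset.Icc 1 k, lam i : ℝ) :
        EReal) := by
  rw [Finset.centerMass, h.sum_smul_residual, div_eq_inv_mul]
  exact dualSN_smul_le (inv_nonneg.2 (h.sum_lam_pos hk).le)
    (h.dualSN_gradient_sub_le hw hm hM hσ hzZ hz k)

end NEHPE

end NEHPESequences

/-- Ergodic convergence of the NE-HPE framework. -/
theorem stmt8
    {E : Type*} [NormedAddCommGroup E] [InnerProductSpace ℝ E] [FiniteDimensional ℝ E]
    (Z : Set E) (p : Seminorm ℝ E) (m M : ℝ) (hm : 0 < m) (hmM : m ≤ M)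
    (w : E → ℝ) (gw : E → E) (hw : IsDGF Z p m M w gw)
    (T : E → Set E) (hT : MaxMonoOp T)
    (hdom : ∀ z, (T z).Nonempty → z ∈ Z) (hsol : ∃ z, 0 ∈ T z)
    (σ : ℝ) (hσ0 : 0 ≤ σ) (hσ1 : σ ≤ 1)
    (lam : ℕ → ℝ) (zs zt : ℕ → E) (ε : ℕ → ℝ)
    (hseq : NEHPE Z w gw T σ lam zs zt ε)
    (r : ℕ → E) (hr : ∀ k, r k = (1 / lam k) • (gw (zs (k - 1)) - gw (zs k)))
    (τ : ℝ) (hτ : τ = Real.sqrt 2 * M / Real.sqrt m)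
    (dw0 : ℝ) (hdw0 : dw0 = sInf (breg w gw (zs 0) '' {z | (0 : E) ∈ T z}))
    (Lam : ℕ → ℝ) (hLam : ∀ k, Lam k = ∑ i ∈ Finset.Icc 1 k, lam i)
    (za ra : ℕ → E)
    (hza : ∀ k, za k = (Lam k)⁻¹ • ∑ i ∈ Finset.Icc 1 k, lam i • zt i)
    (hra : ∀ k, ra k = (Lam k)⁻¹ • ∑ i ∈ Finset.Icc 1 k, lam i • r i)
    (εa : ℕ → ℝ)
    (hεa : ∀ k, εa k
      = (Lam k)⁻¹ * ∑ i ∈ Finset.Icc 1 k, lam i * (ε i + ⟪r i, zt i - za k⟫))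
    (Dset : Set ℝ)
    (hDset : Dset = {x : ℝ | ∃ y, (T y).Nonempty ∧ ∃ y', (T y').Nonempty ∧
        x = min (breg w gw y y') (breg w gw y' y)}) :
    ∀ (k : ℕ) (hk : 1 ≤ k) (ρ : ℝ),
      ρ = (Finset.Icc 1 k).sup' (Finset.nonempty_Icc.mpr hk)
            (fun i => breg w gw (zs i) (zt i)) →
      0 ≤ εa k
      ∧ ra k ∈ epsEnl T (εa k) (za k)
      ∧ dualSN ⇑p (ra k) ≤ ((2 * τ * Real.sqrt dw0 / Lam k : ℝ) : EReal)
      ∧ εa k ≤ 3 * M / m * ((2 * dw0 + ρ) / Lam k)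
      ∧ (σ < 1 → ρ ≤ σ * dw0 / (1 - σ))
      ∧ (BddAbove Dset → ρ ≤ 2 * M / m * (dw0 + sSup Dset)) := by
  obtain rfl : r = hpeResidual gw lam zs := funext hr
  obtain rfl : Lam = fun k => ∑ i ∈ Finset.Icc 1 k, lam i := funext hLam
  obtain rfl : za = fun k => (Finset.Icc 1 k).centerMass lam zt := funext hza
  obtain rfl : ra = fun k => (Finset.Icc 1 k).centerMass lam (hpeResidual gw lam zs) := funext hra
  obtain rfl : εa = fun k => ergodicError (Finset.Icc 1 k) lam ε zt (hpeResidual gw lam zs) :=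
    funext hεa
  subst hτ hdw0 hDset
  rintro k hk ρ rfl
  have hsolZ : {z | 0 ∈ T z} ⊆ Z := fun z hz => hdom z ⟨0, hz⟩
  have hincl := hseq.residual_centerMass_mem_epsEnl hk
  have hinf {α : Type} [Preorder α] [TopologicalSpace α] [ClosedIciTopology α] (f : ℝ → α)
      (hf : Continuous f) {l : α} :=
    hw.le_apply_sInf_breg_image hm.le (hseq.zs_mem 0) hsolZ hsol hf (l := l)
  refine ⟨hT.nonneg_of_mem_epsEnl hincl, hincl, ?_, ?_, fun hσ => ?_, fun hbdd => ?_⟩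
  · exact hinf (fun d => ((2 * (√2 * M / √m) * √d / ∑ i ∈ Finset.Icc 1 k, lam i : ℝ) : EReal))
      (continuous_coe_real_ereal.comp (by fun_prop)) fun z hz =>
        hseq.dualSN_residual_centerMass_le hw hm (hm.le.trans hmM) hσ1 (hsolZ hz) hz hk
  · exact hinf (fun d => 3 * M / m * ((2 * d + _) / ∑ i ∈ Finset.Icc 1 k, lam i)) (by fun_prop)
      fun z hz => hseq.ergodicError_residual_le hw hm hmM hσ1 (hsolZ hz) hz hk
        fun i => Finset.le_sup' (fun i => breg w gw (zs i) (zt i))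
  · exact hinf (fun d => σ * d / (1 - σ)) (by fun_prop) fun z hz => Finset.sup'_le _ _ fun i hi =>
      hseq.breg_le_mul_div_one_sub hw hm.le hσ0 hσ (hsolZ hz) hz (Finset.mem_Icc.1 hi).1
  · exact hinf (fun d => 2 * M / m * (d + _)) (by fun_prop) fun z hz =>
      Finset.sup'_le _ _ fun i hi => hseq.breg_le_of_diam_le hw hm hmM hT hdom hσ1 hz
        (fun y hy y' hy' => le_csSup hbdd ⟨y, hy, y', hy', rfl⟩) (Finset.mem_Icc.1 hi).1
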